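/- arXiv:0704.0329 — 3 statements merged into one kernel-verified Lean document; each statement's English description precedes it below -/
import Mathlib

section
/- Let β ∈ (0,1), λ ∈ ℂ, c ∈ ℂ, and define u(t) = c E_{β,1}(−λ t^β) for t ≥ 0. Then u(0) = c, u is differentiable on (0,∞), and for every t > 0 the Caputo fractional derivative of order β of u satisfies (1/Γ(1−β)) ∫₀^t u′(τ) (t−τ)^{−β} dτ = −λ u(t). -/
open scoped Real
open MeasureTheory

/-- Generalized Mittag-Leffler function `E_{α,γ}(z) = ∑ zⁿ / Γ(αn + γ)`. -/
noncomputable def mittagLeffler (α γ : ℝ) (z : ℂ) : ℂ :=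
  ∑' n : ℕ, z ^ n / (Real.Gamma (α * n + γ) : ℂ)

theorem ml_beta (a b t : ℝ) (ha : 0 < a) (hb : 0 < b) (ht : 0 < t) :
    ∫ τ in (0 : ℝ)..t, τ ^ (a - 1) * (t - τ) ^ (b - 1) =
      t ^ (a + b - 1) * (Real.Gamma a * Real.Gamma b / Real.Gamma (a + b)) := by
  have h1 := Complex.betaIntegral_scaled (a : ℂ) (b : ℂ) ht
  have h2 := Complex.Gamma_mul_Gamma_eq_betaIntegral (s := (a : ℂ)) (t := (b : ℂ))
    (by simpa using ha) (by simpa using hb)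
  have hG : Complex.Gamma ((a : ℂ) + b) ≠ 0 := by
    rw [← Complex.ofReal_add, Complex.Gamma_ofReal]
    exact_mod_cast (Real.Gamma_pos_of_pos (by positivity)).ne'
  have h3 : Complex.betaIntegral a b = Complex.Gamma a * Complex.Gamma b / Complex.Gamma (a + b) := by
    rw [h2]; field_simp
  rw [h3] at h1
  have h4 : ((∫ τ in (0 : ℝ)..t, τ ^ (a - 1) * (t - τ) ^ (b - 1) : ℝ) : ℂ) =
      ∫ x in (0 : ℝ)..t, (x : ℂ) ^ ((a : ℂ) - 1) * ((t : ℂ) - x) ^ ((b : ℂ) - 1) := by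
    rw [← intervalIntegral.integral_ofReal]
    apply intervalIntegral.integral_congr
    intro x hx
    rw [Set.uIcc_of_le ht.le] at hx
    simp only
    rw [Complex.ofReal_mul, Complex.ofReal_cpow hx.1, Complex.ofReal_cpow (sub_nonneg.2 hx.2)]
    push_cast
    rfl
  rw [← Complex.ofReal_inj, h4, h1, ← Complex.ofReal_add, Complex.Gamma_ofReal, Complex.Gamma_ofReal,
    Complex.Gamma_ofReal]
  push_cast
  rw [Complex.ofReal_cpow ht.le]
  push_cast
  rfl

theorem ml_beta_int (a b t : ℝ) (ha : 0 < a) (hb : 0 < b) (ht : 0 < t) :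
    IntervalIntegrable (fun τ => τ ^ (a - 1) * (t - τ) ^ (b - 1)) volume 0 t := by
  by_contra h
  have h1 := ml_beta a b t ha hb ht
  rw [intervalIntegral.integral_undef h] at h1
  have := Real.Gamma_pos_of_pos ha
  have := Real.Gamma_pos_of_pos hb
  have := Real.Gamma_pos_of_pos (add_pos ha hb)
  have : 0 < t ^ (a + b - 1) * (Real.Gamma a * Real.Gamma b / Real.Gamma (a + b)) := by positivity
  linarith

theorem ml_ratio (β x : ℝ) (hβ : β ∈ Set.Ioo (0 : ℝ) 1) (hx : 0 ≤ x) :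
    Real.Gamma (x + 1) / Real.Gamma (x + β + 1) ≤ (x + β) ^ (-β) := by
  obtain ⟨h0, h1⟩ := hβ
  have hp : 0 < x + β := by linarith
  have h := Real.Gamma_mul_add_mul_le_rpow_Gamma_mul_rpow_Gamma (s := x + β) (t := x + β + 1)
    (a := β) (b := 1 - β) hp (by linarith) h0 (by linarith) (by ring)
  have e : β * (x + β) + (1 - β) * (x + β + 1) = x + 1 := by ring
  have g := Real.Gamma_pos_of_pos hp
  have g' : 0 < Real.Gamma (x + β + 1) := Real.Gamma_pos_of_pos (by linarith)
  rw [e] at h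
  rw [div_le_iff₀ g']
  refine h.trans (le_of_eq ?_)
  rw [Real.Gamma_add_one hp.ne', Real.mul_rpow hp.le g.le, mul_left_comm, ← Real.rpow_add g]
  rw [sub_eq_add_neg, Real.rpow_add hp]
  simp
  ring

theorem ml_summable (β : ℝ) (hβ : β ∈ Set.Ioo (0 : ℝ) 1) (x : ℝ) (hx : 0 ≤ x) :
    Summable (fun n : ℕ => x ^ n / Real.Gamma (β * n + 1)) := by
  have h0 := hβ.1
  rcases hx.eq_or_lt with rfl | hx
  · apply summable_of_ne_finset_zero (s := {0})
    intro n hn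
    simp at hn
    simp [hn]
  have hG : ∀ n : ℕ, 0 < Real.Gamma (β * n + 1) := fun n => Real.Gamma_pos_of_pos (by positivity)
  refine summable_of_ratio_test_tendsto_lt_one (l := 0) one_pos
    (Filter.Eventually.of_forall fun n => by have := hG n; positivity) ?_
  have hlim : Filter.Tendsto (fun n : ℕ => x * (β * n + β) ^ (-β)) Filter.atTop (nhds 0) := by
    rw [← mul_zero x]
    refine Filter.Tendsto.const_mul x ((tendsto_rpow_neg_atTop h0).comp ?_)
    exact Filter.tendsto_atTop_add_const_right _ _
      (tendsto_natCast_atTop_atTop.const_mul_atTop h0)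
  refine squeeze_zero (fun n => by positivity) (fun n => ?_) hlim
  have h := ml_ratio β (β * n) hβ (by positivity)
  have e : β * ((n + 1 : ℕ) : ℝ) + 1 = β * n + β + 1 := by push_cast; ring
  have h1 := hG n
  have h2 := hG (n + 1)
  rw [e] at h2 ⊢
  rw [Real.norm_of_nonneg (by positivity), Real.norm_of_nonneg (by positivity)]
  calc _ = x * (Real.Gamma (β * n + 1) / Real.Gamma (β * n + β + 1)) := by
        rw [pow_succ]; field_simp
    _ ≤ _ := by gcongr

theorem ml_hasDerivAt (β : ℝ) (hβ : β ∈ Set.Ioo (0 : ℝ) 1) (lam : ℂ) (t : ℝ) (ht : 0 < t) :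
    HasDerivAt (fun t : ℝ => mittagLeffler β 1 (-lam * ((t ^ β : ℝ) : ℂ)))
      (∑' n : ℕ, (-lam) ^ n / (Real.Gamma (β * n + 1) : ℂ) * ((β * n * t ^ (β * n - 1) : ℝ) : ℂ)) t := by
  have h0 := hβ.1
  have hG : ∀ n : ℕ, 0 < Real.Gamma (β * n + 1) := fun n => Real.Gamma_pos_of_pos (by positivity)
  have key : HasDerivAt (fun t : ℝ => ∑' n : ℕ, (-lam) ^ n / (Real.Gamma (β * n + 1) : ℂ) *
      ((t ^ (β * n) : ℝ) : ℂ))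
      (∑' n : ℕ, (-lam) ^ n / (Real.Gamma (β * n + 1) : ℂ) * ((β * n * t ^ (β * n - 1) : ℝ) : ℂ)) t := by
    have hs := (ml_summable β hβ (‖lam‖ * 2 * (2 * t) ^ β) (by positivity)).mul_left (β * (2 / t))
    have hmem : t ∈ Set.Ioo (t / 2) (2 * t) := ⟨by linarith, by linarith⟩
    refine hasDerivAt_tsum_of_isPreconnected
      (g := fun (n : ℕ) (t : ℝ) => (-lam) ^ n / (Real.Gamma (β * n + 1) : ℂ) * ((t ^ (β * n) : ℝ) : ℂ))
      (g' := fun (n : ℕ) (t : ℝ) => (-lam) ^ n / (Real.Gamma (β * n + 1) : ℂ) *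
        ((β * n * t ^ (β * n - 1) : ℝ) : ℂ)) hs (isOpen_Ioo (a := t / 2) (b := 2 * t))
      isPreconnected_Ioo (y₀ := t) ?_ ?_ hmem ?_ hmem
    · intro n y hy
      have hy0 : 0 < y := by linarith [hy.1]
      have := (Real.hasDerivAt_rpow_const (p := β * n) (Or.inl hy0.ne')).ofReal_comp
      exact this.const_mul _
    · intro n y hy
      have hy0 : 0 < y := by linarith [hy.1]
      have := hG n
      rw [norm_mul, norm_div, norm_pow, norm_neg, Complex.norm_real, Complex.norm_real,
        Real.norm_of_nonneg this.le, Real.norm_of_nonneg (by positivity), Real.rpow_sub_one hy0.ne',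
        mul_pow, mul_pow, ← Real.rpow_natCast ((2 * t) ^ β), ← Real.rpow_mul (by positivity)]
      have e1 : y ^ (β * n) ≤ (2 * t) ^ (β * n) :=
        Real.rpow_le_rpow hy0.le hy.2.le (by positivity)
      have e2 : 1 / y ≤ 2 / t := by
        rw [div_le_div_iff₀ hy0 ht]; linarith [hy.1]
      have e3 : (n : ℝ) ≤ 2 ^ n := by exact_mod_cast n.lt_two_pow_self.le
      calc _ = ‖lam‖ ^ n / Real.Gamma (β * n + 1) * (β * n * (y ^ (β * n) * (1 / y))) := by ring
        _ ≤ ‖lam‖ ^ n / Real.Gamma (β * n + 1) * (β * 2 ^ n * ((2 * t) ^ (β * n) * (2 / t))) := by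
          gcongr
        _ = _ := by ring
    · refine Summable.of_norm_bounded (ml_summable β hβ (‖lam‖ * t ^ β) (by positivity)) ?_
      intro n
      have := hG n
      rw [norm_mul, norm_div, norm_pow, norm_neg, Complex.norm_real, Complex.norm_real,
        Real.norm_of_nonneg this.le, Real.norm_of_nonneg (by positivity),
        mul_pow, ← Real.rpow_natCast (t ^ β), ← Real.rpow_mul (by positivity)]
      exact le_of_eq (by ring)
  refine key.congr_of_eventuallyEq ?_
  filter_upwards [lt_mem_nhds ht] with y hy
  unfold mittagLeffler
  refine tsum_congr fun n => ?_
  rw [mul_pow, ← Complex.ofReal_pow, ← Real.rpow_natCast (y ^ β), ← Real.rpow_mul hy.le]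
  ring

theorem ml_integral (β : ℝ) (hβ : β ∈ Set.Ioo (0 : ℝ) 1) (lam : ℂ) (t : ℝ) (ht : 0 < t) :
    ∫ τ in (0 : ℝ)..t, (∑' n : ℕ, (-lam) ^ n / (Real.Gamma (β * n + 1) : ℂ) *
        ((β * n * τ ^ (β * n - 1) : ℝ) : ℂ)) * (((t - τ) ^ (-β) : ℝ) : ℂ) =
      (Real.Gamma (1 - β) : ℂ) * (-lam * mittagLeffler β 1 (-lam * ((t ^ β : ℝ) : ℂ))) := by
  obtain ⟨h0, h1⟩ := hβ
  have hG : ∀ n : ℕ, 0 < Real.Gamma (β * n + 1) := fun n => Real.Gamma_pos_of_pos (by positivity)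
  have hG' : ∀ n : ℕ, 0 < Real.Gamma (β * (n + 1)) := fun n => Real.Gamma_pos_of_pos (by positivity)
  have hGb : 0 < Real.Gamma (1 - β) := Real.Gamma_pos_of_pos (by linarith)
  let k : ℕ → ℝ → ℝ := fun n τ => τ ^ (β * (n + 1) - 1) * (t - τ) ^ (1 - β - 1)
  let F : ℕ → ℝ → ℂ := fun n τ => ((-lam) ^ (n + 1) / (Real.Gamma (β * (n + 1)) : ℂ)) * (k n τ : ℂ)
  have hkint : ∀ n, IntervalIntegrable (k n) volume 0 t := fun n =>
    ml_beta_int _ _ t (by positivity) (by linarith) ht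
  have hkval : ∀ n, ∫ τ in (0:ℝ)..t, k n τ =
      (t ^ β) ^ n * (Real.Gamma (β * (n + 1)) * Real.Gamma (1 - β) / Real.Gamma (β * n + 1)) := by
    intro n
    have := ml_beta (β * (n + 1)) (1 - β) t (by positivity) (by linarith) ht
    rw [show β * ((n : ℝ) + 1) + (1 - β) = β * n + 1 by ring, show β * (n : ℝ) + 1 - 1 = β * n by ring]
      at this
    rw [← Real.rpow_natCast (t ^ β), ← Real.rpow_mul ht.le]
    exact this
  have hknn : ∀ n, ∀ τ ∈ Set.Ioc 0 t, 0 ≤ k n τ := fun n τ hτ =>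
    mul_nonneg (Real.rpow_nonneg hτ.1.le _) (Real.rpow_nonneg (sub_nonneg.2 hτ.2) _)
  have hFint : ∀ n, Integrable (F n) (volume.restrict (Set.Ioc 0 t)) := fun n =>
    (((intervalIntegrable_iff_integrableOn_Ioc_of_le ht.le).1 (hkint n)).ofReal).const_mul _
  have hFnorm : ∀ n, ∫ τ in Set.Ioc 0 t, ‖F n τ‖ =
      (‖lam‖ * Real.Gamma (1 - β)) * ((‖lam‖ * t ^ β) ^ n / Real.Gamma (β * n + 1)) := by
    intro n
    have e : ∫ τ in Set.Ioc 0 t, ‖F n τ‖ =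
        ∫ τ in Set.Ioc 0 t, ‖lam‖ ^ (n + 1) / Real.Gamma (β * (n + 1)) * k n τ := by
      refine setIntegral_congr_fun measurableSet_Ioc fun τ hτ => ?_
      simp only [F]
      rw [norm_mul, norm_div, norm_pow, norm_neg, Complex.norm_real, Complex.norm_real,
        Real.norm_of_nonneg (hG' n).le, Real.norm_of_nonneg (hknn n τ hτ)]
    rw [e, integral_const_mul, ← intervalIntegral.integral_of_le ht.le, hkval]
    have := (hG' n).ne'
    have := (hG n).ne'
    field_simp
    ring
  have hFval : ∀ n, ∫ τ in Set.Ioc 0 t, F n τ =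
      (Real.Gamma (1 - β) : ℂ) * (-lam * ((-lam * ((t ^ β : ℝ) : ℂ)) ^ n / (Real.Gamma (β * n + 1) : ℂ))) := by
    intro n
    simp only [F]
    rw [integral_const_mul, integral_complex_ofReal, ← intervalIntegral.integral_of_le ht.le, hkval]
    have a1 : (Real.Gamma (β * (n + 1)) : ℂ) ≠ 0 := by exact_mod_cast (hG' n).ne'
    have a2 : (Real.Gamma (β * n + 1) : ℂ) ≠ 0 := by exact_mod_cast (hG n).ne'
    rw [mul_pow]
    simp only [Complex.ofReal_mul, Complex.ofReal_div, Complex.ofReal_pow]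
    field_simp
    ring
  have hsum := hasSum_integral_of_summable_integral_norm hFint (by
    simp only [hFnorm]
    exact (ml_summable β ⟨h0, h1⟩ (‖lam‖ * t ^ β) (by positivity)).mul_left _)
  have hval := hsum.tsum_eq
  simp only [hFval] at hval
  rw [tsum_mul_left, tsum_mul_left] at hval
  rw [mittagLeffler, hval, intervalIntegral.integral_of_le ht.le]
  refine setIntegral_congr_fun measurableSet_Ioc fun τ hτ => ?_
  rw [← tsum_mul_right]
  have hF0 : ∀ n : ℕ, (-lam) ^ (n + 1) / (Real.Gamma (β * (n + 1 : ℕ) + 1) : ℂ) *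
        ((β * (n + 1 : ℕ) * τ ^ (β * (n + 1 : ℕ) - 1) : ℝ) : ℂ) * (((t - τ) ^ (-β) : ℝ) : ℂ) = F n τ := by
    intro n
    have hb : β * ((n : ℝ) + 1) ≠ 0 := by positivity
    have a1 : (Real.Gamma (β * (n + 1)) : ℂ) ≠ 0 := by exact_mod_cast (hG' n).ne'
    simp only [F, k]
    rw [show 1 - β - 1 = -β by ring]
    push_cast
    rw [Real.Gamma_add_one hb]
    have hb' : (β : ℂ) * ((n : ℂ) + 1) ≠ 0 := by exact_mod_cast hb
    have hb2 : (β : ℂ) ≠ 0 := by exact_mod_cast h0.ne'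
    push_cast
    field_simp
  rw [← tsum_congr hF0]
  symm
  refine Function.Injective.tsum_eq (f := fun n : ℕ => (-lam) ^ n / (Real.Gamma (β * n + 1) : ℂ) *
        ((β * n * τ ^ (β * n - 1) : ℝ) : ℂ) * (((t - τ) ^ (-β) : ℝ) : ℂ)) (g := Nat.succ)
        Nat.succ_injective ?_
  intro n hn
  rcases n with _ | n
  · simp at hn
  · exact ⟨n, rfl⟩

/-- For `β ∈ (0,1)`, the function `u(t) = c E_{β,1}(-λ t^β)` satisfies `u(0) = c`,
is differentiable on `(0,∞)`, and its Caputo derivative of order `β` equals `-λ u(t)`: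
`(1/Γ(1-β)) ∫₀^t u′(τ) (t-τ)^{-β} dτ = -λ u(t)` for all `t > 0`. -/
theorem caputo_mittagLeffler_eigen (β : ℝ) (hβ : β ∈ Set.Ioo (0 : ℝ) 1)
    (lam c : ℂ) (u : ℝ → ℂ)
    (hu : ∀ t : ℝ, u t = c * mittagLeffler β 1 (-lam * ((t ^ β : ℝ) : ℂ))) :
    u 0 = c ∧ (∀ t : ℝ, 0 < t → DifferentiableAt ℝ u t) ∧
      ∀ t : ℝ, 0 < t →
        (1 / (Real.Gamma (1 - β) : ℂ)) *
            ∫ τ in (0 : ℝ)..t, deriv u τ * (((t - τ) ^ (-β) : ℝ) : ℂ) =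
          -lam * u t := by
  have hd : ∀ t : ℝ, 0 < t → HasDerivAt u (c * ∑' n : ℕ, (-lam) ^ n / (Real.Gamma (β * n + 1) : ℂ) *
      ((β * n * t ^ (β * n - 1) : ℝ) : ℂ)) t := by
    intro t ht
    rw [funext hu]
    exact (ml_hasDerivAt β hβ lam t ht).const_mul c
  refine ⟨?_, fun t ht => (hd t ht).differentiableAt, fun t ht => ?_⟩
  · rw [hu, Real.zero_rpow hβ.1.ne', mittagLeffler, tsum_eq_single 0]
    · simp
    · intro n hn
      simp [hn]
  · have hGb : (Real.Gamma (1 - β) : ℂ) ≠ 0 := by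
      exact_mod_cast (Real.Gamma_pos_of_pos (by linarith [hβ.2])).ne'
    have e : ∫ τ in (0 : ℝ)..t, deriv u τ * (((t - τ) ^ (-β) : ℝ) : ℂ) =
        ∫ τ in (0 : ℝ)..t, c * ((∑' n : ℕ, (-lam) ^ n / (Real.Gamma (β * n + 1) : ℂ) *
        ((β * n * τ ^ (β * n - 1) : ℝ) : ℂ)) * (((t - τ) ^ (-β) : ℝ) : ℂ)) := by
      rw [intervalIntegral.integral_of_le ht.le, intervalIntegral.integral_of_le ht.le]
      refine setIntegral_congr_fun measurableSet_Ioc fun τ hτ => ?_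
      rw [(hd τ hτ.1).deriv, mul_assoc]
    rw [e, intervalIntegral.integral_const_mul, ml_integral β hβ lam t ht, hu]
    field_simp
end

section
/- Let β > 0 be real, λ ∈ ℂ, and let φ : [0,∞) → ℂ be continuous and bounded. Define w(t) = ∫₀^t φ(t−ξ) ξ^{β−1} E_{β,β}(−λ ξ^β) dξ. Then for every t ≥ 0, w(t) = (1/Γ(β)) ∫₀^t (t−τ)^{β−1} φ(τ) dτ − (λ/Γ(β)) ∫₀^t (t−τ)^{β−1} w(τ) dτ; that is, w = ₀D_t^{−β}(φ − λ w), where ₀D_t^{−β} is the Riemann–Liouville fractional integral of order β. -/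
open scoped Real
open MeasureTheory

lemma gamma_lower (A x : ℝ) (hA : 0 < A) (hx : 1 ≤ x) :
    A ^ (x - 1) * Real.exp (-A) ≤ Real.Gamma x := by
  have hx0 : 0 < x := by linarith
  have hint := Real.GammaIntegral_convergent hx0
  rw [Real.Gamma_eq_integral hx0, ← integral_exp_neg_Ioi A, ← integral_const_mul]
  calc ∫ y in Set.Ioi A, A ^ (x - 1) * Real.exp (-y)
      ≤ ∫ y in Set.Ioi A, Real.exp (-y) * y ^ (x - 1) := by
        refine setIntegral_mono_on ?_ (hint.mono_set (Set.Ioi_subset_Ioi hA.le))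
          measurableSet_Ioi ?_
        · exact (integrableOn_exp_neg_Ioi A).const_mul _
        · intro y hy
          rw [mul_comm]
          have hy' : A < y := hy
          gcongr
    _ ≤ _ := by
        refine setIntegral_mono_set hint ?_ (Set.Ioi_subset_Ioi hA.le).eventuallyLE
        filter_upwards [ae_restrict_mem measurableSet_Ioi] with y hy
        have hy' : (0:ℝ) < y := hy
        simp only [Pi.zero_apply]
        positivity

lemma summable_ml (β : ℝ) (hβ : 0 < β) (R : ℝ) (hR : 0 ≤ R) :
    Summable (fun n : ℕ => R ^ n / Real.Gamma (β * n + β)) := by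
  set A : ℝ := (R + 1) ^ (1 / β) with hAdef
  have hA : 0 < A := by positivity
  have hAb : A ^ β = R + 1 := by
    rw [hAdef, ← Real.rpow_mul (by positivity), one_div_mul_cancel hβ.ne', Real.rpow_one]
  have hg : Summable (fun n : ℕ => (R / (R + 1)) ^ n * (Real.exp A * A ^ (1 - β))) := by
    apply Summable.mul_right
    apply summable_geometric_of_lt_one (by positivity)
    rw [div_lt_one (by positivity)]; linarith
  refine Summable.of_norm_bounded_eventually_nat hg ?_
  have hev : ∀ᶠ n : ℕ in Filter.atTop, 1 ≤ β * n + β := by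
    obtain ⟨N, hN⟩ := exists_nat_gt (1 / β)
    filter_upwards [Filter.eventually_ge_atTop N] with n hn
    have h1 : (N : ℝ) ≤ n := by exact_mod_cast hn
    have h2 : 1 / β < n := lt_of_lt_of_le hN h1
    rw [div_lt_iff₀ hβ] at h2
    nlinarith
  filter_upwards [hev] with n hn
  have hG := gamma_lower A _ hA hn
  have hGpos : 0 < Real.Gamma (β * n + β) := Real.Gamma_pos_of_pos (by linarith)
  rw [Real.norm_of_nonneg (by positivity), div_le_iff₀ hGpos]
  have e1 : A ^ (β * n + β - 1) = (R + 1) ^ n * A ^ (β - 1) := by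
    rw [show β * (n:ℝ) + β - 1 = β * n + (β - 1) by ring, Real.rpow_add hA, Real.rpow_mul hA.le,
      hAb, Real.rpow_natCast]
  have e2 : A ^ (1 - β) * A ^ (β - 1) = 1 := by
    rw [← Real.rpow_add hA]; simp
  have e3 : Real.exp A * Real.exp (-A) = 1 := by rw [← Real.exp_add]; simp
  calc R ^ n = (R / (R + 1)) ^ n * (Real.exp A * A ^ (1 - β)) *
        (A ^ (β * n + β - 1) * Real.exp (-A)) := by
        rw [e1, div_pow]
        have : (R + 1) ^ n ≠ 0 := by positivity
        calc R ^ n = R ^ n * 1 * 1 := by ring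
          _ = R ^ n * (Real.exp A * Real.exp (-A)) * (A ^ (1 - β) * A ^ (β - 1)) := by
            rw [e2, e3]
          _ = _ := by field_simp
    _ ≤ _ := by gcongr

lemma ml_cont (β : ℝ) (hβ : 0 < β) : Continuous (mittagLeffler β β) := by
  rw [← continuousOn_univ]
  intro z _
  have hc : ContinuousOn (mittagLeffler β β) (Metric.ball 0 (‖z‖ + 1)) := by
    unfold mittagLeffler
    refine continuousOn_tsum (u := fun n : ℕ => (‖z‖ + 1) ^ n / Real.Gamma (β * n + β))
      (fun n => by fun_prop) (summable_ml β hβ _ (by positivity)) ?_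
    intro n x hx
    have hG : 0 < Real.Gamma (β * n + β) := Real.Gamma_pos_of_pos (by positivity)
    rw [norm_div, norm_pow, Complex.norm_real, Real.norm_of_nonneg hG.le]
    have : ‖x‖ ≤ ‖z‖ + 1 := by simpa using (Metric.mem_ball.1 hx).le
    gcongr
  exact ((hc.continuousAt (Metric.isOpen_ball.mem_nhds (by simp)))).continuousWithinAt

noncomputable def kerG (β : ℝ) (n : ℕ) (s : ℝ) : ℝ :=
  s ^ (β * n + β - 1) / Real.Gamma (β * n + β)

noncomputable def kerK (β : ℝ) (lam : ℂ) (s : ℝ) : ℂ :=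
  ((s ^ (β - 1) : ℝ) : ℂ) * mittagLeffler β β (-lam * ((s ^ β : ℝ) : ℂ))

lemma kerG_zero (β s : ℝ) : kerG β 0 s = s ^ (β - 1) / Real.Gamma β := by
  simp [kerG]

lemma kerG_pos (β : ℝ) (hβ : 0 < β) (n : ℕ) (s : ℝ) (hs : 0 < s) : 0 < kerG β n s := by
  have hG : 0 < Real.Gamma (β * n + β) := Real.Gamma_pos_of_pos (by positivity)
  unfold kerG; positivity

lemma kerG_eq (β : ℝ) (n : ℕ) (s : ℝ) (hs : 0 < s) :
    kerG β n s = s ^ (β - 1) * ((s ^ β) ^ n / Real.Gamma (β * n + β)) := by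
  unfold kerG
  rw [show β * (n:ℝ) + β - 1 = (β - 1) + β * n by ring, Real.rpow_add hs, Real.rpow_mul hs.le,
    Real.rpow_natCast, mul_div_assoc]

lemma summable_kerG (β : ℝ) (hβ : 0 < β) (R s : ℝ) (hR : 0 ≤ R) (hs : 0 < s) :
    Summable (fun n : ℕ => R ^ n * kerG β n s) := by
  have := (summable_ml β hβ (R * s ^ β) (by positivity)).mul_left (s ^ (β - 1))
  refine this.congr fun n => ?_
  rw [kerG_eq β n s hs, mul_pow]; ring

lemma kerK_hasSum (β : ℝ) (hβ : 0 < β) (lam : ℂ) (s : ℝ) (hs : 0 < s) :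
    HasSum (fun n : ℕ => (-lam) ^ n * (kerG β n s : ℂ)) (kerK β lam s) := by
  have hsum : Summable (fun n : ℕ => (-lam) ^ n * (kerG β n s : ℂ)) := by
    refine Summable.of_norm_bounded (summable_kerG β hβ ‖lam‖ s (norm_nonneg _) hs) fun n => ?_
    rw [norm_mul, norm_pow, norm_neg, Complex.norm_real,
      Real.norm_of_nonneg (kerG_pos β hβ n s hs).le]
  have : kerK β lam s = ∑' n : ℕ, (-lam) ^ n * (kerG β n s : ℂ) := by
    unfold kerK mittagLeffler
    rw [← tsum_mul_left]
    congr 1; ext n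
    rw [kerG_eq β n s hs]
    push_cast
    rw [mul_pow]; ring
  rw [this]; exact hsum.hasSum

lemma beta_kerG (β : ℝ) (hβ : 0 < β) (n : ℕ) (x : ℝ) (hx : 0 < x) :
    ∫ s in (0:ℝ)..x, kerG β n s * kerG β 0 (x - s) = kerG β (n + 1) x := by
  have hp : 0 < β * n + β := by positivity
  have hG1 : (Real.Gamma (β * n + β) : ℂ) ≠ 0 := by
    exact_mod_cast (Real.Gamma_pos_of_pos hp).ne'
  have hG2 : (Real.Gamma β : ℂ) ≠ 0 := by exact_mod_cast (Real.Gamma_pos_of_pos hβ).ne'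
  have h1 := Complex.betaIntegral_scaled ((β * n + β : ℝ) : ℂ) (β : ℂ) hx
  rw [Complex.betaIntegral_eq_Gamma_mul_div _ _ (by simpa using hp) (by simpa using hβ)] at h1
  apply Complex.ofReal_injective
  rw [← intervalIntegral.integral_ofReal]
  have h2 : ∫ s in (0:ℝ)..x, ((kerG β n s * kerG β 0 (x - s) : ℝ) : ℂ) =
      ∫ s in (0:ℝ)..x, ((Real.Gamma (β * n + β) : ℂ)⁻¹ * (Real.Gamma β : ℂ)⁻¹) *
        ((s : ℂ) ^ (((β * n + β : ℝ) : ℂ) - 1) * ((x : ℂ) - s) ^ ((β : ℂ) - 1)) := by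
    apply intervalIntegral.integral_congr
    intro s hs
    rw [Set.uIcc_of_le hx.le] at hs
    simp only [kerG_zero]
    unfold kerG
    push_cast
    rw [Complex.ofReal_cpow hs.1, Complex.ofReal_cpow (sub_nonneg.2 hs.2)]
    push_cast
    ring
  rw [h2, intervalIntegral.integral_const_mul, h1, Complex.Gamma_ofReal, Complex.Gamma_ofReal,
    ← Complex.ofReal_add, Complex.Gamma_ofReal]
  unfold kerG
  push_cast
  rw [Complex.ofReal_cpow hx.le]
  have e : β * ((n:ℝ) + 1) + β = β * n + β + β := by ring
  rw [e]
  generalize (Real.Gamma (β * n + β) : ℂ) = a at *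
  generalize (Real.Gamma β : ℂ) = b at *
  generalize (Real.Gamma (β * n + β + β) : ℂ) = c at *
  push_cast
  calc a⁻¹ * b⁻¹ * ((x:ℂ) ^ ((β:ℂ) * n + β + β - 1) * (a * b / c))
      = (a⁻¹ * a) * (b⁻¹ * b) * ((x:ℂ) ^ ((β:ℂ) * n + β + β - 1) / c) := by ring
    _ = _ := by rw [inv_mul_cancel₀ hG1, inv_mul_cancel₀ hG2]; ring

lemma volterra_kernel (β : ℝ) (hβ : 0 < β) (lam : ℂ) (x : ℝ) (hx : 0 < x) :
    lam * ∫ s in (0:ℝ)..x, kerK β lam s * (kerG β 0 (x - s) : ℂ) =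
      (kerG β 0 x : ℂ) - kerK β lam x := by
  set F : ℕ → ℝ → ℂ := fun n s => (-lam) ^ n * ((kerG β n s * kerG β 0 (x - s) : ℝ) : ℂ) with hF
  have hii : ∀ n, IntegrableOn (fun s => kerG β n s * kerG β 0 (x - s)) (Set.Ioo 0 x) := by
    intro n
    have := intervalIntegral.intervalIntegrable_of_integral_ne_zero
      (f := fun s => kerG β n s * kerG β 0 (x - s)) (a := 0) (b := x) (μ := volume)
      (by rw [beta_kerG β hβ n x hx]; exact (kerG_pos β hβ _ x hx).ne')
    rwa [intervalIntegrable_iff_integrableOn_Ioo_of_le hx.le] at this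
  have hval : ∀ n, ∫ s in Set.Ioo 0 x, kerG β n s * kerG β 0 (x - s) = kerG β (n + 1) x := by
    intro n
    rw [← beta_kerG β hβ n x hx, intervalIntegral.integral_of_le hx.le, integral_Ioc_eq_integral_Ioo]
  have hFi : ∀ n, Integrable (F n) (volume.restrict (Set.Ioo 0 x)) := fun n =>
    ((hii n).ofReal (𝕜 := ℂ)).const_mul _
  have hnorm : ∀ n, ∫ s in Set.Ioo 0 x, ‖F n s‖ = ‖lam‖ ^ n * kerG β (n + 1) x := by
    intro n
    rw [← hval n, ← integral_const_mul]
    refine setIntegral_congr_fun measurableSet_Ioo fun s hs => ?_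
    have h1 := kerG_pos β hβ n s hs.1
    have h2 := kerG_pos β hβ 0 (x - s) (sub_pos.2 hs.2)
    simp only [hF]
    rw [norm_mul, norm_pow, norm_neg, Complex.norm_real, Real.norm_of_nonneg (by positivity)]
  have hsn : Summable fun n => ∫ s in Set.Ioo 0 x, ‖F n s‖ := by
    simp_rw [hnorm]
    have h := (summable_nat_add_iff 1).2
      (summable_kerG β hβ (‖lam‖ + 1) x (by positivity) hx)
    refine Summable.of_nonneg_of_le (fun n => ?_) (fun n => ?_) h
    · have := kerG_pos β hβ (n + 1) x hx
      positivity
    · have := kerG_pos β hβ (n + 1) x hx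
      gcongr ?_ * _
      calc ‖lam‖ ^ n ≤ (‖lam‖ + 1) ^ n := by gcongr; linarith
        _ ≤ (‖lam‖ + 1) ^ (n + 1) := by
          apply pow_le_pow_right₀ _ (Nat.le_succ n)
          linarith [norm_nonneg lam]
  have hs := hasSum_integral_of_summable_integral_norm hFi hsn
  have hint : ∫ s in Set.Ioo 0 x, ∑' n, F n s =
      ∫ s in (0:ℝ)..x, kerK β lam s * (kerG β 0 (x - s) : ℂ) := by
    rw [intervalIntegral.integral_of_le hx.le, integral_Ioc_eq_integral_Ioo]
    refine setIntegral_congr_fun measurableSet_Ioo fun s hs => ?_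
    have := (kerK_hasSum β hβ lam s hs.1).mul_right (kerG β 0 (x - s) : ℂ)
    beta_reduce
    rw [← this.tsum_eq]
    congr 1; ext n
    simp only [hF]
    push_cast; ring
  have hFv : ∀ n, ∫ s in Set.Ioo 0 x, F n s = (-lam) ^ n * (kerG β (n + 1) x : ℂ) := by
    intro n
    simp only [hF]
    rw [integral_const_mul, integral_complex_ofReal, hval n]
  rw [hint] at hs
  simp_rw [hFv] at hs
  have h3 := hs.mul_left (-lam)
  have h4 := (hasSum_nat_add_iff' 1).2 (kerK_hasSum β hβ lam x hx)
  have h5 : (fun n : ℕ => -lam * ((-lam) ^ n * (kerG β (n + 1) x : ℂ))) =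
      fun n : ℕ => (-lam) ^ (n + 1) * (kerG β (n + 1) x : ℂ) := by
    ext n; ring
  rw [h5] at h3
  have h6 := h3.unique h4
  simp at h6
  linear_combination -h6

lemma kerG_ii (β : ℝ) (hβ : 0 < β) (T : ℝ) :
    IntervalIntegrable (fun s => (kerG β 0 s : ℂ)) volume 0 T := by
  have h := (intervalIntegral.intervalIntegrable_rpow' (a := 0) (b := T)
    (show -1 < β - 1 by linarith)).div_const (Real.Gamma β)
  simp_rw [kerG_zero]
  exact ⟨h.1.ofReal, h.2.ofReal⟩

lemma kerK_ii (β : ℝ) (hβ : 0 < β) (lam : ℂ) (T : ℝ) :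
    IntervalIntegrable (kerK β lam) volume 0 T := by
  have h := (intervalIntegral.intervalIntegrable_rpow' (a := 0) (b := T)
    (show -1 < β - 1 by linarith))
  have h' : IntervalIntegrable (fun s : ℝ => ((s ^ (β - 1) : ℝ) : ℂ)) volume 0 T :=
    ⟨h.1.ofReal, h.2.ofReal⟩
  refine h'.mul_continuousOn (Continuous.continuousOn ?_)
  have := Real.continuous_rpow_const (q := β) hβ.le
  exact (ml_cont β hβ).comp (continuous_const.mul (Complex.continuous_ofReal.comp this))

lemma int_Ioo (T : ℝ) (hT : 0 ≤ T) (F H : ℝ → ℂ) (hz : ∀ s, s ∉ Set.Ioo 0 T → F s = 0)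
    (he : ∀ s ∈ Set.Ioo 0 T, F s = H s) : ∫ s, F s = ∫ s in (0:ℝ)..T, H s := by
  rw [intervalIntegral.integral_of_le hT, integral_Ioc_eq_integral_Ioo,
    ← integral_indicator measurableSet_Ioo]
  congr 1; ext s
  by_cases hs : s ∈ Set.Ioo 0 T
  · rw [Set.indicator_of_mem hs, he s hs]
  · rw [Set.indicator_of_notMem hs, hz s hs]

lemma assoc_trunc (T : ℝ) (hT : 0 < T) (f k g : ℝ → ℂ) (hf : ContinuousOn f (Set.Icc 0 T))
    (hk : IntervalIntegrable k volume 0 T) (hg : IntervalIntegrable g volume 0 T) :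
    ∫ τ in (0:ℝ)..T, (∫ s in (0:ℝ)..τ, f s * k (τ - s)) * g (T - τ) =
      ∫ s in (0:ℝ)..T, f s * ∫ u in (0:ℝ)..(T - s), k u * g (T - s - u) := by
  set I := Set.Ioo 0 T with hI
  have hfi : Integrable (I.indicator f) :=
    (integrable_indicator_iff measurableSet_Ioo).2
      (hf.integrableOn_Icc.mono_set Set.Ioo_subset_Icc_self)
  have hki : Integrable (I.indicator k) :=
    (integrable_indicator_iff measurableSet_Ioo).2
      ((intervalIntegrable_iff_integrableOn_Ioo_of_le hT.le).1 hk)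
  have hgi : Integrable (I.indicator g) :=
    (integrable_indicator_iff measurableSet_Ioo).2
      ((intervalIntegrable_iff_integrableOn_Ioo_of_le hT.le).1 hg)
  obtain ⟨C, hC⟩ := isCompact_Icc.exists_bound_of_continuousOn hf
  have hC0 : 0 ≤ C := (norm_nonneg _).trans (hC 0 ⟨le_rfl, hT.le⟩)
  have key := convolution_assoc (x₀ := T) (μ := (volume : Measure ℝ)) (ν := (volume : Measure ℝ))
    (ContinuousLinearMap.mul ℝ ℂ) (ContinuousLinearMap.mul ℝ ℂ)
    (ContinuousLinearMap.mul ℝ ℂ) (ContinuousLinearMap.mul ℝ ℂ)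
    (f := I.indicator f) (g := I.indicator k) (k := I.indicator g)
    (fun x y z => by simp [mul_assoc])
    hfi.aestronglyMeasurable hki.aestronglyMeasurable hgi.aestronglyMeasurable
    (hfi.ae_convolution_exists _ hki) (hki.norm.ae_convolution_exists _ hgi.norm)
    (by
      unfold ConvolutionExistsAt
      have h1 := (hki.norm.integrable_convolution (ContinuousLinearMap.mul ℝ ℝ) hgi.norm).comp_sub_left T
      refine h1.bdd_mul (c := C) hfi.norm.aestronglyMeasurable ?_
      refine Filter.Eventually.of_forall fun s => ?_
      rw [norm_norm]
      by_cases hs : s ∈ I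
      · rw [Set.indicator_of_mem hs]; exact hC s (Set.Ioo_subset_Icc_self hs)
      · rw [Set.indicator_of_notMem hs, norm_zero]; exact hC0)
  simp only [convolution, ContinuousLinearMap.mul_apply'] at key
  rw [int_Ioo T hT.le _ (fun τ => (∫ s in (0:ℝ)..τ, f s * k (τ - s)) * g (T - τ)),
    int_Ioo T hT.le _ (fun s => f s * ∫ u in (0:ℝ)..(T - s), k u * g (T - s - u))] at key
  · exact key
  · intro s hs
    rw [Set.indicator_of_notMem hs, zero_mul]
  · intro s hs
    rw [Set.indicator_of_mem hs]
    congr 1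
    refine int_Ioo (T - s) (sub_pos.2 hs.2).le _ _ ?_ ?_
    · intro u hu
      by_cases h1 : u ∈ I
      · rw [Set.indicator_of_notMem (a := T - s - u), mul_zero]
        intro h2
        exact hu ⟨h1.1, by have := h2.1; linarith⟩
      · rw [Set.indicator_of_notMem h1, zero_mul]
    · intro u hu
      have := hs.1; have := hs.2; have := hu.1; have := hu.2
      rw [Set.indicator_of_mem (a := u), Set.indicator_of_mem (a := T - s - u)]
      · constructor <;> linarith
      · constructor <;> linarith
  · intro s hs
    rw [Set.indicator_of_notMem (a := T - s), mul_zero]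
    intro h
    exact hs ⟨by have := h.2; linarith, by have := h.1; linarith⟩
  · intro τ hτ
    rw [Set.indicator_of_mem (a := T - τ)]
    swap
    · have := hτ.1; have := hτ.2
      constructor <;> linarith
    congr 1
    refine int_Ioo τ hτ.1.le _ _ ?_ ?_
    · intro u hu
      by_cases h1 : u ∈ I
      · rw [Set.indicator_of_notMem (a := τ - u), mul_zero]
        intro h2
        exact hu ⟨h1.1, by have := h2.1; linarith⟩
      · rw [Set.indicator_of_notMem h1, zero_mul]
    · intro u hu
      have := hτ.1; have := hτ.2; have := hu.1; have := hu.2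
      rw [Set.indicator_of_mem (a := u), Set.indicator_of_mem (a := τ - u)]
      · constructor <;> linarith
      · constructor <;> linarith

/-- For `β > 0`, `λ ∈ ℂ` and `φ` continuous and bounded on `[0,∞)`, the function
`w(t) = ∫₀^t φ(t-ξ) ξ^{β-1} E_{β,β}(-λ ξ^β) dξ` satisfies
`w(t) = (1/Γ(β)) ∫₀^t (t-τ)^{β-1} φ(τ) dτ - (λ/Γ(β)) ∫₀^t (t-τ)^{β-1} w(τ) dτ`,
i.e. `w = ₀D_t^{-β}(φ - λ w)` with the Riemann–Liouville fractional integral. -/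
theorem convolution_kernel_volterra (β : ℝ) (hβ : 0 < β) (lam : ℂ) (φ : ℝ → ℂ)
    (hφcont : ContinuousOn φ (Set.Ici 0))
    (hφb : ∃ C : ℝ, ∀ t ≥ (0 : ℝ), ‖φ t‖ ≤ C)
    (w : ℝ → ℂ)
    (hw : ∀ t : ℝ, w t =
      ∫ ξ in (0 : ℝ)..t, φ (t - ξ) * ((ξ ^ (β - 1) : ℝ) : ℂ) *
        mittagLeffler β β (-lam * ((ξ ^ β : ℝ) : ℂ))) :
    ∀ t ≥ (0 : ℝ), w t =
      (1 / (Real.Gamma β : ℂ)) *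
          (∫ τ in (0 : ℝ)..t, (((t - τ) ^ (β - 1) : ℝ) : ℂ) * φ τ) -
        lam / (Real.Gamma β : ℂ) *
          ∫ τ in (0 : ℝ)..t, (((t - τ) ^ (β - 1) : ℝ) : ℂ) * w τ := by
  intro t ht
  rcases ht.eq_or_lt with h0 | ht
  · subst h0
    rw [hw 0]; simp
  have hw' : ∀ τ, w τ = ∫ s in (0:ℝ)..τ, φ s * kerK β lam (τ - s) := by
    intro τ
    have := intervalIntegral.integral_comp_sub_left (a := 0) (b := τ)
      (fun s => φ s * kerK β lam (τ - s)) τ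
    simp only [sub_self, sub_zero, sub_sub_cancel] at this
    rw [hw τ, ← this]
    congr 1; ext s
    unfold kerK; ring
  have hφc : ContinuousOn φ (Set.Icc 0 t) := hφcont.mono Set.Icc_subset_Ici_self
  have hassoc := assoc_trunc t ht φ (kerK β lam) (fun s => (kerG β 0 s : ℂ)) hφc
    (kerK_ii β hβ lam t) (kerG_ii β hβ t)
  have hφc' : ContinuousOn φ (Set.uIcc 0 t) := by rwa [Set.uIcc_of_le ht.le]
  have i1 : IntervalIntegrable (fun s => φ s * (kerG β 0 (t - s) : ℂ)) volume 0 t := by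
    have h := ((kerG_ii β hβ t).comp_sub_left t).symm
    simp only [sub_self, sub_zero] at h
    exact h.continuousOn_mul hφc'
  have i2 : IntervalIntegrable (fun s => φ s * kerK β lam (t - s)) volume 0 t := by
    have h := ((kerK_ii β hβ lam t).comp_sub_left t).symm
    simp only [sub_self, sub_zero] at h
    exact h.continuousOn_mul hφc'
  have main : lam * ∫ τ in (0:ℝ)..t, w τ * (kerG β 0 (t - τ) : ℂ) =
      (∫ s in (0:ℝ)..t, φ s * (kerG β 0 (t - s) : ℂ)) - w t := by
    simp_rw [← hw'] at hassoc
    rw [hassoc, hw' t, ← intervalIntegral.integral_sub i1 i2,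
      ← intervalIntegral.integral_const_mul]
    simp only [intervalIntegral.integral_of_le ht.le, integral_Ioc_eq_integral_Ioo]
    refine setIntegral_congr_fun measurableSet_Ioo fun s hs => ?_
    have := volterra_kernel β hβ lam (t - s) (sub_pos.2 hs.2)
    beta_reduce
    linear_combination φ s * this
  have e : ∀ f : ℝ → ℂ, ∫ τ in (0:ℝ)..t, f τ * (kerG β 0 (t - τ) : ℂ) =
      1 / (Real.Gamma β : ℂ) * ∫ τ in (0:ℝ)..t, (((t - τ) ^ (β - 1) : ℝ) : ℂ) * f τ := by
    intro f
    rw [← intervalIntegral.integral_const_mul]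
    congr 1; ext τ
    rw [kerG_zero]; push_cast; ring
  rw [e, e] at main
  linear_combination main
end

section
/- Let α ∈ (0,1) and θ be real with |θ| ≤ α, and let f : ℝ → ℂ be a Schwartz function. Define (D_θ^α f)(x) = (Γ(1+α)/π) { sin((α+θ)π/2) ∫₀^∞ (f(x+ξ) − f(x)) ξ^{−1−α} dξ + sin((α−θ)π/2) ∫₀^∞ (f(x−ξ) − f(x)) ξ^{−1−α} dξ }. Then both integrals converge absolutely for every x, and for every real k, ∫_ℝ e^{ikx} (D_θ^α f)(x) dx = −|k|^α exp(i·sign(k)·θπ/2) · ∫_ℝ e^{ikx} f(x) dx. -/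
open scoped Real
open MeasureTheory


lemma rf_min_int (α : ℝ) (h0 : 0 < α) (h1 : α < 1) :
    IntegrableOn (fun t : ℝ => min 1 t / t ^ (1 + α)) (Set.Ioi 0) := by
  rw [← Set.Ioc_union_Ioi_eq_Ioi zero_le_one]
  refine IntegrableOn.union ?_ ?_
  · have : IntegrableOn (fun t : ℝ => t ^ (-α)) (Set.Ioc 0 1) := by
      rw [← intervalIntegrable_iff_integrableOn_Ioc_of_le zero_le_one]
      exact intervalIntegral.intervalIntegrable_rpow' (by linarith)
    refine this.congr_fun (fun t ht => ?_) measurableSet_Ioc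
    simp only
    rw [min_eq_right ht.2, Real.rpow_add ht.1, Real.rpow_one, Real.rpow_neg ht.1.le]
    have := ht.1.ne'
    have := (Real.rpow_pos_of_pos ht.1 α).ne'
    field_simp
  · refine (integrableOn_Ioi_rpow_of_lt (a := -(1 + α)) (by linarith) zero_lt_one).congr_fun
      (fun t ht => ?_) measurableSet_Ioi
    simp only
    have ht' : (1 : ℝ) < t := ht
    rw [min_eq_left ht'.le, Real.rpow_neg (by linarith), one_div]

lemma rf_int_of_bound (α : ℝ) (h0 : 0 < α) (h1 : α < 1) (u : ℝ → ℂ) (hu : Continuous u) (C : ℝ)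
    (hC : ∀ t > 0, ‖u t‖ ≤ C * min 1 t) :
    IntegrableOn (fun t : ℝ => u t / ((t ^ (1 + α) : ℝ) : ℂ)) (Set.Ioi 0) := by
  refine Integrable.mono' ((rf_min_int α h0 h1).const_mul C) ?_ ?_
  · apply Measurable.aestronglyMeasurable
    have := hu.measurable
    fun_prop
  · refine (ae_restrict_iff' measurableSet_Ioi).2 (.of_forall fun t ht => ?_)
    have ht' : (0 : ℝ) < t := ht
    have := Real.rpow_pos_of_pos ht' (1 + α)
    rw [norm_div, Complex.norm_real, Real.norm_of_nonneg this.le, ← mul_div_assoc]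
    gcongr
    exact hC t ht'

lemma rf_exp_bound {z : ℂ} (hz : z.re ≤ 0) : ‖Complex.exp z - 1‖ ≤ ‖z‖ := by
  have := (convex_halfSpace_re_le 0).norm_image_sub_le_of_norm_deriv_le (𝕜 := ℂ)
    (f := Complex.exp) (C := 1) (x := 0) (y := z) (fun x _ => Complex.differentiableAt_exp)
    (fun x hx => by
      rw [Complex.deriv_exp, Complex.norm_exp]
      exact Real.exp_le_one_iff.2 hx) (by simp) hz
  simpa using this

lemma rf_exp_bound' {r : ℂ} (hr : 0 ≤ r.re) {t : ℝ} (ht : 0 < t) :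
    ‖Complex.exp (-(r * t)) - 1‖ ≤ (2 + ‖r‖) * min 1 t := by
  have hre : (-(r * t)).re ≤ 0 := by simp; positivity
  rcases le_total 1 t with h | h
  · rw [min_eq_left h]
    have : ‖Complex.exp (-(r * t))‖ ≤ 1 := by
      rw [Complex.norm_exp]; exact Real.exp_le_one_iff.2 hre
    calc _ ≤ ‖Complex.exp (-(r * t))‖ + ‖(1:ℂ)‖ := norm_sub_le _ _
      _ ≤ _ := by rw [norm_one]; have := norm_nonneg r; linarith
  · rw [min_eq_right h]
    refine (rf_exp_bound hre).trans ?_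
    rw [norm_neg, norm_mul, Complex.norm_real, Real.norm_of_nonneg ht.le]
    nlinarith

noncomputable def rfJ (α : ℝ) (r : ℂ) : ℂ :=
  ∫ t in Set.Ioi (0:ℝ), (Complex.exp (-(r * t)) - 1) / ((t ^ (1 + α) : ℝ) : ℂ)

noncomputable def rfG (α : ℝ) (r : ℂ) : ℂ :=
  ∫ t in Set.Ioi (0:ℝ), Complex.exp (-(r * t)) * ((t ^ (-α) : ℝ) : ℂ)

lemma rfJ_int (α : ℝ) (h0 : 0 < α) (h1 : α < 1) {r : ℂ} (hr : 0 ≤ r.re) :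
    IntegrableOn (fun t : ℝ => (Complex.exp (-(r * t)) - 1) / ((t ^ (1 + α) : ℝ) : ℂ))
      (Set.Ioi 0) :=
  rf_int_of_bound α h0 h1 _ (by fun_prop) _ (fun t ht => rf_exp_bound' hr ht)

lemma rf_G_int_real (α : ℝ) (h1 : α < 1) {b : ℝ} (hb : 0 < b) :
    IntegrableOn (fun t : ℝ => Real.exp (-(b * t)) * t ^ (-α)) (Set.Ioi 0) := by
  have := integrableOn_rpow_mul_exp_neg_mul_rpow (p := 1) (s := -α) (b := b) (by linarith)
    one_pos hb
  simpa [mul_comm] using this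

lemma rf_G_norm (α : ℝ) (r : ℂ) {t : ℝ} (ht : 0 < t) :
    ‖Complex.exp (-(r * t)) * ((t ^ (-α) : ℝ) : ℂ)‖ = Real.exp (-(r.re * t)) * t ^ (-α) := by
  rw [norm_mul, Complex.norm_exp, Complex.norm_real,
    Real.norm_of_nonneg (Real.rpow_pos_of_pos ht _).le]
  simp

lemma rfG_int (α : ℝ) (h1 : α < 1) {r : ℂ} (hr : 0 < r.re) :
    IntegrableOn (fun t : ℝ => Complex.exp (-(r * t)) * ((t ^ (-α) : ℝ) : ℂ))
      (Set.Ioi 0) := by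
  refine Integrable.mono' (rf_G_int_real α h1 hr) ?_ ?_
  · exact Measurable.aestronglyMeasurable (by fun_prop)
  · refine (ae_restrict_iff' measurableSet_Ioi).2 (.of_forall fun t ht => ?_)
    exact (rf_G_norm α r ht).le

lemma rfJ_eq_G (α : ℝ) (h0 : 0 < α) (h1 : α < 1) {r : ℂ} (hr : 0 < r.re) :
    rfJ α r = -(r / α) * rfG α r := by
  have hα : (α : ℂ) ≠ 0 := by exact_mod_cast h0.ne'
  set u : ℝ → ℂ := fun t => Complex.exp (-(r * t)) - 1 with hu
  set u' : ℝ → ℂ := fun t => -r * Complex.exp (-(r * t)) with hu'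
  set v : ℝ → ℂ := fun t => ((-(t ^ (-α)) / α : ℝ) : ℂ) with hv
  set v' : ℝ → ℂ := fun t => ((t ^ (1 + α) : ℝ) : ℂ)⁻¹ with hv'
  have key := integral_Ioi_mul_deriv_eq_deriv_mul (a := (0:ℝ)) (u := u) (v := v) (u' := u')
    (v' := v') (a' := 0) (b' := 0) ?_ ?_ ?_ ?_ ?_ ?_
  · have e1 : rfJ α r = ∫ x in Set.Ioi (0:ℝ), u x * v' x := by
      simp only [rfJ, hu, hv', div_eq_mul_inv]
    rw [e1, key, rfG, ← integral_const_mul, sub_zero, zero_sub, ← integral_neg]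
    congr 1
    ext t
    simp only [hu', hv]
    push_cast
    field_simp
  · intro t ht
    have h : HasDerivAt (fun z : ℂ => Complex.exp (-(r * z)) - 1) (-r * Complex.exp (-(r * t))) t := by
      have := ((((hasDerivAt_id (t:ℂ)).const_mul r).neg).cexp).sub_const 1
      refine this.congr_deriv ?_
      simp [mul_comm]
    exact h.comp_ofReal
  · intro t ht
    have ht' : (0:ℝ) < t := ht
    have : HasDerivAt (fun t : ℝ => -(t ^ (-α)) / α) ((t ^ (1+α))⁻¹) t := by
      have := ((Real.hasDerivAt_rpow_const (x := t) (p := -α) (Or.inl ht'.ne')).neg).div_const α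
      refine this.congr_deriv ?_
      rw [← Real.rpow_neg ht'.le]
      field_simp
      congr 1; ring
    simpa [hv, hv'] using this.ofReal_comp
  · have := rfJ_int α h0 h1 hr.le
    simp only [div_eq_mul_inv] at this
    exact this
  · have := (rfG_int α h1 hr).const_mul (r / α)
    refine this.congr (.of_forall fun t => ?_)
    simp only [hu', hv, Pi.mul_apply]
    push_cast
    field_simp
  · have hb : ∀ t ∈ Set.Ioi (0:ℝ), ‖(u * v) t‖ ≤ ‖r‖ / α * t ^ (1 - α) := by
      intro t ht
      have ht' : (0:ℝ) < t := ht
      have hp := Real.rpow_pos_of_pos ht' (-α)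
      simp only [hu, hv, Pi.mul_apply, norm_mul, Complex.norm_real, norm_div, norm_neg]
      rw [Real.norm_of_nonneg hp.le, Real.norm_of_nonneg h0.le]
      have := rf_exp_bound (z := -(r * t)) (by simp; positivity)
      rw [norm_neg, norm_mul, Complex.norm_real, Real.norm_of_nonneg ht'.le] at this
      calc _ ≤ (‖r‖ * t) * (t ^ (-α) / α) := by gcongr
        _ = _ := by rw [sub_eq_add_neg, Real.rpow_add ht', Real.rpow_one]; ring
    refine squeeze_zero_norm' (a := fun t => ‖r‖ / α * t ^ (1 - α))
      (Filter.eventually_of_mem self_mem_nhdsWithin hb) ?_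
    have : ContinuousAt (fun t : ℝ => ‖r‖ / α * t ^ (1 - α)) 0 :=
      (Real.continuousAt_rpow_const _ _ (Or.inr (by linarith))).const_mul _
    have h2 := this.tendsto.mono_left (nhdsWithin_le_nhds (s := Set.Ioi 0))
    simpa [Real.zero_rpow (by linarith : 1 - α ≠ 0)] using h2
  · have hb : ∀ t ∈ Set.Ioi (0:ℝ), ‖(u * v) t‖ ≤ 2 / α * t ^ (-α) := by
      intro t ht
      have ht' : (0:ℝ) < t := ht
      have hp := Real.rpow_pos_of_pos ht' (-α)
      simp only [hu, hv, Pi.mul_apply, norm_mul, Complex.norm_real, norm_div, norm_neg]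
      rw [Real.norm_of_nonneg hp.le, Real.norm_of_nonneg h0.le]
      have h1 : ‖Complex.exp (-(r * t))‖ ≤ 1 := by
        rw [Complex.norm_exp]; exact Real.exp_le_one_iff.2 (by simp; positivity)
      have : ‖Complex.exp (-(r * t)) - 1‖ ≤ 2 := by
        refine (norm_sub_le _ _).trans ?_
        rw [norm_one]; linarith
      calc _ ≤ 2 * (t ^ (-α) / α) := by gcongr
        _ = _ := by ring
    refine squeeze_zero_norm' (a := fun t => 2 / α * t ^ (-α))
      (Filter.eventually_of_mem (Filter.Ioi_mem_atTop 0) hb) ?_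
    simpa using (tendsto_rpow_neg_atTop h0).const_mul (2 / α)

lemma rfJ_deriv (α : ℝ) (h0 : 0 < α) (h1 : α < 1) {r : ℂ} (hr : 0 < r.re) :
    HasDerivAt (rfJ α) (-rfG α r) r := by
  have hs : {z : ℂ | r.re / 2 < z.re} ∈ nhds r :=
    (isOpen_lt continuous_const Complex.continuous_re).mem_nhds (by simp; linarith)
  have := (hasDerivAt_integral_of_dominated_loc_of_deriv_le (μ := volume.restrict (Set.Ioi (0:ℝ)))
    (F := fun (r : ℂ) (t : ℝ) => (Complex.exp (-(r * t)) - 1) / ((t ^ (1 + α) : ℝ) : ℂ))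
    (F' := fun (r : ℂ) (t : ℝ) => -(Complex.exp (-(r * t)) * ((t ^ (-α) : ℝ) : ℂ)))
    (bound := fun t => Real.exp (-(r.re / 2 * t)) * t ^ (-α)) (x₀ := r) hs ?_
    (rfJ_int α h0 h1 hr.le) ?_ ?_ (rf_G_int_real α h1 (by linarith)) ?_).2
  · rw [integral_neg] at this
    exact this
  · exact .of_forall fun z => Measurable.aestronglyMeasurable (by fun_prop)
  · exact Measurable.aestronglyMeasurable (by fun_prop)
  · refine (ae_restrict_iff' measurableSet_Ioi).2 (.of_forall fun t ht z hz => ?_)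
    have ht' : (0:ℝ) < t := ht
    have hz' : r.re / 2 < z.re := hz
    rw [norm_neg, rf_G_norm α z ht]
    have := Real.rpow_pos_of_pos ht' (-α)
    gcongr
  · refine (ae_restrict_iff' measurableSet_Ioi).2 (.of_forall fun t ht z hz => ?_)
    have ht' : (0:ℝ) < t := ht
    have := (((((hasDerivAt_id z).mul_const (t:ℂ)).neg).cexp).sub_const 1).div_const
      (((t ^ (1 + α) : ℝ) : ℂ))
    refine this.congr_deriv ?_
    have hp : ((t ^ α : ℝ) : ℂ) ≠ 0 := by exact_mod_cast (Real.rpow_pos_of_pos ht' α).ne'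
    have htc : (t : ℂ) ≠ 0 := by exact_mod_cast ht'.ne'
    rw [Real.rpow_add ht', Real.rpow_neg ht'.le, Real.rpow_one]
    simp only [id, Pi.neg_apply]
    push_cast
    field_simp

lemma rfG_one (α : ℝ) (h1 : α < 1) : rfG α 1 = Real.Gamma (1 - α) := by
  rw [Real.Gamma_eq_integral (by linarith), rfG, ← integral_complex_ofReal]
  congr 1
  ext t
  push_cast
  simp

lemma rfJ_formula (α : ℝ) (h0 : 0 < α) (h1 : α < 1) {r : ℂ} (hr : 0 < r.re) :
    rfJ α r = -(Real.Gamma (1 - α) / α : ℝ) * r ^ (α : ℂ) := by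
  have hα : (α : ℂ) ≠ 0 := by exact_mod_cast h0.ne'
  set U : Set ℂ := {z | 0 < z.re} with hU
  have hUo : IsOpen U := isOpen_lt continuous_const Complex.continuous_re
  have hUc : Convex ℝ U := convex_halfSpace_re_gt 0
  have hne : ∀ z ∈ U, z ≠ 0 := by
    rintro z hz rfl
    simp [hU] at hz
  have hd : ∀ z ∈ U, HasDerivAt (fun z => rfJ α z * z ^ (-α : ℂ)) 0 z := by
    intro z hz
    have h2 := (rfJ_deriv α h0 h1 hz).mul
      ((hasDerivAt_id z).cpow_const (c := (-α : ℂ)) (Or.inl hz))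
    refine h2.congr_deriv ?_
    rw [rfJ_eq_G α h0 h1 hz]
    simp only [id]
    rw [Complex.cpow_sub _ _ (hne z hz), Complex.cpow_one]
    have := hne z hz
    field_simp
    ring
  have hc := hUo.is_const_of_deriv_eq_zero hUc.isPreconnected
    (fun z hz => (hd z hz).differentiableAt.differentiableWithinAt) (fun z hz => (hd z hz).deriv)
    hr (show (1:ℂ) ∈ U by simp [hU])
  simp only [Complex.one_cpow, mul_one] at hc
  rw [rfJ_eq_G α h0 h1 (r := 1) (by simp), rfG_one α h1, Complex.cpow_neg] at hc
  have hz : r ^ (α : ℂ) ≠ 0 := by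
    rw [Ne, Complex.cpow_eq_zero_iff]; exact fun h => hne r hr h.1
  rw [← div_eq_mul_inv, div_eq_iff hz] at hc
  rw [hc]
  push_cast
  ring

lemma rfJ_formula' (α : ℝ) (h0 : 0 < α) (h1 : α < 1) {k : ℝ} (hk : k ≠ 0) :
    rfJ α (Complex.I * k) = -(Real.Gamma (1 - α) / α : ℝ) * (Complex.I * k) ^ (α : ℂ) := by
  have hcurve : Filter.Tendsto (fun e : ℝ => (e : ℂ) + Complex.I * k) (nhdsWithin 0 (Set.Ioi 0))
      (nhds (Complex.I * k)) := by
    have : Continuous (fun e : ℝ => (e : ℂ) + Complex.I * k) := by fun_prop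
    have := (this.tendsto 0).mono_left (nhdsWithin_le_nhds (s := Set.Ioi 0))
    simpa using this
  have hev : ∀ᶠ e : ℝ in nhdsWithin 0 (Set.Ioi 0), 0 < e ∧ e < 1 := by
    exact Ioo_mem_nhdsGT one_pos
  have t1 : Filter.Tendsto (fun e : ℝ => rfJ α ((e : ℂ) + Complex.I * k))
      (nhdsWithin 0 (Set.Ioi 0)) (nhds (rfJ α (Complex.I * k))) := by
    refine tendsto_integral_filter_of_dominated_convergence
      (fun t => (3 + |k|) * (min 1 t / t ^ (1 + α))) ?_ ?_
      ((rf_min_int α h0 h1).const_mul _) ?_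
    · exact .of_forall fun z => Measurable.aestronglyMeasurable (by fun_prop)
    · filter_upwards [hev] with e he
      refine (ae_restrict_iff' measurableSet_Ioi).2 (.of_forall fun t ht => ?_)
      have ht' : (0 : ℝ) < t := ht
      have := Real.rpow_pos_of_pos ht' (1 + α)
      rw [norm_div, Complex.norm_real, Real.norm_of_nonneg this.le, ← mul_div_assoc]
      gcongr
      refine (rf_exp_bound' (by simp; exact he.1.le) ht').trans ?_
      have hm : 0 ≤ min 1 t := le_min zero_le_one ht'.le
      have : ‖(e : ℂ) + Complex.I * k‖ ≤ 1 + |k| := by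
        refine (norm_add_le _ _).trans ?_
        simp only [Complex.norm_real, norm_mul, Complex.norm_I, one_mul, Real.norm_eq_abs,
          abs_of_pos he.1]
        linarith [he.2]
      exact mul_le_mul_of_nonneg_right (by linarith) hm
    · refine .of_forall fun t => ?_
      have hc : Continuous (fun z : ℂ => (Complex.exp (-(z * t)) - 1) / ((t ^ (1 + α) : ℝ) : ℂ)) := by
        fun_prop
      exact (hc.tendsto _).comp hcurve
  have t2 : Filter.Tendsto (fun e : ℝ => -((Real.Gamma (1 - α) / α : ℝ):ℂ) * ((e : ℂ) + Complex.I * k) ^ (α : ℂ))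
      (nhdsWithin 0 (Set.Ioi 0))
      (nhds (-((Real.Gamma (1 - α) / α : ℝ):ℂ) * (Complex.I * k) ^ (α : ℂ))) := by
    refine Filter.Tendsto.const_mul _ ?_
    refine (continuousAt_cpow_const ?_).tendsto.comp hcurve
    right; simpa using hk
  refine tendsto_nhds_unique t1 (t2.congr' ?_)
  filter_upwards [hev] with e he
  exact (rfJ_formula α h0 h1 (by simp; exact he.1)).symm

lemma rf_schwartz_diff (f : SchwartzMap ℝ ℂ) : ∃ C : ℝ, 0 ≤ C ∧ ∀ x h : ℝ, |h| ≤ 1 →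
    ‖f (x + h) - f x‖ ≤ C * (1 + x ^ 2)⁻¹ * |h| := by
  set C := 2 ^ (2, 1).1 * ((Finset.Iic ((2 : ℕ), (1 : ℕ))).sup
    (fun m => SchwartzMap.seminorm ℝ m.1 m.2)) f with hC
  have hb : ∀ y, (1 + |y|) ^ 2 * ‖deriv f y‖ ≤ C := by
    intro y
    have := SchwartzMap.one_add_le_sup_seminorm_apply (𝕜 := ℝ) (m := (2, 1)) (k := 2) (n := 1)
      le_rfl le_rfl f y
    rwa [norm_iteratedFDeriv_eq_norm_iteratedDeriv, iteratedDeriv_one, Real.norm_eq_abs] at this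
  have hC0 : 0 ≤ C := le_trans (by positivity) (hb 0)
  refine ⟨4 * C, by positivity, fun x h hh => ?_⟩
  have key := (convex_Icc (x - 1) (x + 1)).norm_image_sub_le_of_norm_deriv_le (𝕜 := ℝ)
    (f := f) (C := 4 * C * (1 + x ^ 2)⁻¹) (x := x) (y := x + h)
    (fun y _ => f.differentiableAt) ?_ (by constructor <;> linarith)
    (by have := abs_le.1 hh; constructor <;> linarith)
  · simpa using key
  · intro y hy
    have h1 : |x| ≤ |y| + 1 := by
      have : |x - y| ≤ 1 := abs_le.2 ⟨by linarith [hy.2], by linarith [hy.1]⟩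
      have := abs_sub_abs_le_abs_sub x y
      linarith
    have h2 : 1 + x ^ 2 ≤ 4 * (1 + |y|) ^ 2 := by
      rw [← sq_abs x]
      have := abs_nonneg x
      have := abs_nonneg y
      nlinarith
    rw [← div_eq_mul_inv, le_div_iff₀ (by positivity)]
    have := hb y
    have := norm_nonneg (deriv f y)
    nlinarith

lemma rf_pt_bound (f : SchwartzMap ℝ ℂ) (s : ℝ) (hs : |s| = 1) : ∃ C : ℝ, ∀ x : ℝ, ∀ t > 0,
    ‖f (x + s * t) - f x‖ ≤ C * min 1 t := by
  obtain ⟨C, hC, h⟩ := rf_schwartz_diff f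
  obtain ⟨M, hM⟩ : ∃ M, ∀ x, ‖f x‖ ≤ M :=
    ⟨_, fun x => f.norm_le_seminorm ℝ x⟩
  have hM0 : 0 ≤ M := (norm_nonneg _).trans (hM 0)
  refine ⟨C + 2 * M, fun x t ht => ?_⟩
  rcases le_total 1 t with h1 | h1
  · rw [min_eq_left h1]
    refine (norm_sub_le _ _).trans ?_
    linarith [hM x, hM (x + s * t)]
  · rw [min_eq_right h1]
    have hst : |s * t| = t := by rw [abs_mul, hs, one_mul, abs_of_pos ht]
    have := h x (s * t) (by rw [hst]; exact h1)
    rw [hst] at this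
    refine this.trans ?_
    have h3 : (1 + x ^ 2)⁻¹ ≤ 1 := inv_le_one_of_one_le₀ (by nlinarith)
    have : C * (1 + x ^ 2)⁻¹ ≤ C + 2 * M := by nlinarith
    exact mul_le_mul_of_nonneg_right this ht.le

lemma rf_L1_bound (f : SchwartzMap ℝ ℂ) (s : ℝ) (hs : |s| = 1) : ∃ C : ℝ, ∀ t > 0,
    ∫ x, ‖f (x + s * t) - f x‖ ≤ C * min 1 t := by
  obtain ⟨C, hC, h⟩ := rf_schwartz_diff f
  have hf : Integrable f := f.integrable
  have hft : ∀ t : ℝ, Integrable (fun x => f (x + s * t)) := fun t => hf.comp_add_right _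
  set A := ∫ x : ℝ, (1 + x ^ 2)⁻¹ with hA
  set M := ∫ x, ‖f x‖ with hMdef
  have hA0 : 0 ≤ A := integral_nonneg fun x => by positivity
  have hM0 : 0 ≤ M := integral_nonneg fun x => by positivity
  refine ⟨C * A + 2 * M, fun t ht => ?_⟩
  rcases le_total 1 t with h1 | h1
  · rw [min_eq_left h1]
    calc ∫ x, ‖f (x + s * t) - f x‖ ≤ ∫ x, (‖f (x + s * t)‖ + ‖f x‖) :=
          integral_mono ((hft t).sub hf).norm ((hft t).norm.add hf.norm) fun x => norm_sub_le _ _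
      _ = M + M := by
          rw [integral_add (hft t).norm hf.norm, integral_add_right_eq_self (fun x => ‖f x‖)]
      _ ≤ _ := by nlinarith
  · rw [min_eq_right h1]
    have hst : |s * t| = t := by rw [abs_mul, hs, one_mul, abs_of_pos ht]
    calc ∫ x, ‖f (x + s * t) - f x‖ ≤ ∫ x : ℝ, C * (1 + x ^ 2)⁻¹ * t :=
          integral_mono ((hft t).sub hf).norm
            ((integrable_inv_one_add_sq.const_mul C).mul_const t) fun x => by
              have := h x (s * t) (by rw [hst]; exact h1)
              rwa [hst] at this
      _ = C * A * t := by rw [integral_mul_const, integral_const_mul]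
      _ ≤ _ := by nlinarith

lemma rf_prod_int (α : ℝ) (h0 : 0 < α) (h1 : α < 1) (f : SchwartzMap ℝ ℂ) (s : ℝ) (hs : |s| = 1)
    (k : ℝ) :
    Integrable (Function.uncurry fun (x t : ℝ) => Complex.exp (Complex.I * ((k * x : ℝ) : ℂ)) *
      ((f (x + s * t) - f x) / ((t ^ (1 + α) : ℝ) : ℂ)))
      ((volume : Measure ℝ).prod (volume.restrict (Set.Ioi (0:ℝ)))) := by
  have hf : Integrable f := f.integrable
  have hft : ∀ t : ℝ, Integrable (fun x => f (x + s * t)) := fun t => hf.comp_add_right _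
  have hm : AEStronglyMeasurable (Function.uncurry fun (x t : ℝ) =>
      Complex.exp (Complex.I * ((k * x : ℝ) : ℂ)) *
      ((f (x + s * t) - f x) / ((t ^ (1 + α) : ℝ) : ℂ)))
      ((volume : Measure ℝ).prod (volume.restrict (Set.Ioi (0:ℝ)))) := by
    apply Measurable.aestronglyMeasurable
    have := f.continuous.measurable
    simp only [Function.uncurry_def]
    fun_prop
  have hnorm : ∀ x t : ℝ, 0 < t → ‖Complex.exp (Complex.I * ((k * x : ℝ) : ℂ)) *
      ((f (x + s * t) - f x) / ((t ^ (1 + α) : ℝ) : ℂ))‖ =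
      ‖f (x + s * t) - f x‖ / t ^ (1 + α) := by
    intro x t ht
    have := Real.rpow_pos_of_pos ht (1 + α)
    rw [norm_mul, norm_div, Complex.norm_real, Real.norm_of_nonneg this.le, Complex.norm_exp]
    simp
  rw [integrable_prod_iff' hm]
  obtain ⟨C, hC⟩ := rf_L1_bound f s hs
  constructor
  · refine .of_forall fun t => ?_
    simp only [Function.uncurry_def]
    refine (((hft t).sub hf).div_const _).bdd_mul (c := 1) ?_ ?_
    · exact Measurable.aestronglyMeasurable (by fun_prop)
    · refine .of_forall fun x => ?_
      rw [Complex.norm_exp]; simp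
  · refine Integrable.mono' ((rf_min_int α h0 h1).const_mul C) ?_ ?_
    · exact hm.norm.prod_swap.integral_prod_right'
    · refine (ae_restrict_iff' measurableSet_Ioi).2 (.of_forall fun t ht => ?_)
      have ht' : (0 : ℝ) < t := ht
      have hp := Real.rpow_pos_of_pos ht' (1 + α)
      simp only [Function.uncurry_def]
      rw [Real.norm_of_nonneg (integral_nonneg fun x => norm_nonneg _)]
      simp only [hnorm _ t ht']
      rw [integral_div, ← mul_div_assoc]
      gcongr
      exact hC t ht'

lemma rf_fubini (α : ℝ) (h0 : 0 < α) (h1 : α < 1) (f : SchwartzMap ℝ ℂ) (s : ℝ) (hs : |s| = 1)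
    (k : ℝ) :
    Integrable (fun x : ℝ => Complex.exp (Complex.I * ((k * x : ℝ) : ℂ)) *
      ∫ t in Set.Ioi (0:ℝ), (f (x + s * t) - f x) / ((t ^ (1 + α) : ℝ) : ℂ)) ∧
    ∫ x : ℝ, Complex.exp (Complex.I * ((k * x : ℝ) : ℂ)) *
      ∫ t in Set.Ioi (0:ℝ), (f (x + s * t) - f x) / ((t ^ (1 + α) : ℝ) : ℂ) =
    rfJ α (Complex.I * (k * s : ℝ)) *
      ∫ x : ℝ, Complex.exp (Complex.I * ((k * x : ℝ) : ℂ)) * f x := by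
  have hI := rf_prod_int α h0 h1 f s hs k
  have hf : Integrable f := f.integrable
  have hbm : ∀ g : ℝ → ℂ, Integrable g →
      Integrable fun x : ℝ => Complex.exp (Complex.I * ((k * x : ℝ) : ℂ)) * g x := by
    intro g hg
    refine hg.bdd_mul (c := 1) ?_ ?_
    · exact Measurable.aestronglyMeasurable (by fun_prop)
    · refine .of_forall fun x => ?_
      rw [Complex.norm_exp]; simp
  constructor
  · have := hI.integral_prod_left
    simpa only [Function.uncurry_def, integral_const_mul] using this
  · have e0 : ∀ x : ℝ, Complex.exp (Complex.I * ((k * x : ℝ) : ℂ)) *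
        (∫ t in Set.Ioi (0:ℝ), (f (x + s * t) - f x) / ((t ^ (1 + α) : ℝ) : ℂ)) =
        ∫ t in Set.Ioi (0:ℝ), Complex.exp (Complex.I * ((k * x : ℝ) : ℂ)) *
          ((f (x + s * t) - f x) / ((t ^ (1 + α) : ℝ) : ℂ)) :=
      fun x => (integral_const_mul _ _).symm
    simp only [e0]
    rw [integral_integral_swap hI, rfJ, ← integral_mul_const]
    congr 1
    ext t
    have e1 : ∀ x : ℝ, Complex.exp (Complex.I * ((k * x : ℝ) : ℂ)) *
        ((f (x + s * t) - f x) / ((t ^ (1 + α) : ℝ) : ℂ)) =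
        (Complex.exp (-(Complex.I * (k * s : ℝ) * t)) *
          (Complex.exp (Complex.I * ((k * (x + s * t) : ℝ) : ℂ)) * f (x + s * t)) -
          Complex.exp (Complex.I * ((k * x : ℝ) : ℂ)) * f x) / ((t ^ (1 + α) : ℝ) : ℂ) := by
      intro x
      rw [← mul_assoc, ← Complex.exp_add]
      have : -(Complex.I * (k * s : ℝ) * t) + Complex.I * ((k * (x + s * t) : ℝ) : ℂ)
          = Complex.I * ((k * x : ℝ) : ℂ) := by push_cast; ring
      rw [this]
      ring
    simp only [e1]
    rw [integral_div, integral_sub (((hbm f hf).comp_add_right (s * t)).const_mul _) (hbm f hf),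
      integral_const_mul,
      integral_add_right_eq_self (fun x : ℝ => Complex.exp (Complex.I * ((k * x : ℝ) : ℂ)) * f x)]
    ring

lemma rf_Icpow (α : ℝ) {k : ℝ} (hk : k ≠ 0) :
    (Complex.I * k) ^ (α : ℂ) = ((|k| ^ α : ℝ) : ℂ) *
      Complex.exp (Complex.I * ((Real.sign k * α * π / 2 : ℝ) : ℂ)) := by
  have habs : 0 < |k| := abs_pos.2 hk
  have hne : Complex.I * (k : ℂ) ≠ 0 := mul_ne_zero Complex.I_ne_zero (by exact_mod_cast hk)
  have harg : (Complex.I * (k : ℂ)).arg = Real.sign k * (π / 2) := by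
    rcases lt_or_gt_of_ne hk with h | h
    · rw [Real.sign_of_neg h]
      have : Complex.I * (k : ℂ) = ((-k : ℝ) : ℂ) * (-Complex.I) := by push_cast; ring
      rw [this, Complex.arg_real_mul _ (by linarith), Complex.arg_neg_I]; ring
    · rw [Real.sign_of_pos h, mul_comm, Complex.arg_real_mul _ h, Complex.arg_I]; ring
  rw [Complex.cpow_def_of_ne_zero hne, Complex.log, harg, norm_mul, Complex.norm_I, one_mul,
    Complex.norm_real, Real.norm_eq_abs, Real.rpow_def_of_pos habs, Complex.ofReal_exp,
    ← Complex.exp_add]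
  congr 1
  push_cast
  ring

lemma rf_trig (a t : ℝ) :
    ((Real.sin (a + t) : ℝ) : ℂ) * Complex.exp (Complex.I * a) +
    ((Real.sin (a - t) : ℝ) : ℂ) * Complex.exp (Complex.I * (-a : ℝ)) =
    ((Real.sin (2 * a) : ℝ) : ℂ) * Complex.exp (Complex.I * t) := by
  rw [mul_comm Complex.I, mul_comm Complex.I, mul_comm Complex.I, Complex.exp_mul_I, Complex.exp_mul_I,
    Complex.exp_mul_I]
  push_cast
  rw [Complex.sin_add, Complex.sin_sub, Complex.sin_two_mul, Complex.sin_neg, Complex.cos_neg]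
  ring

lemma rf_symbol (α θ : ℝ) (h0 : 0 < α) (h1 : α < 1) (k : ℝ) :
    ((Real.Gamma (1 + α) / π : ℝ) : ℂ) *
      (((Real.sin ((α + θ) * π / 2) : ℝ) : ℂ) * rfJ α (Complex.I * (k * 1 : ℝ)) +
        ((Real.sin ((α - θ) * π / 2) : ℝ) : ℂ) * rfJ α (Complex.I * (k * (-1) : ℝ))) =
    -(((|k| ^ α : ℝ) : ℂ) *
          Complex.exp (Complex.I * ((Real.sign k * θ * π / 2 : ℝ) : ℂ))) := by
  rcases eq_or_ne k 0 with rfl | hk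
  · simp [rfJ, Real.zero_rpow h0.ne']
  have hsin : Real.sin (π * α) ≠ 0 :=
    (Real.sin_pos_of_pos_of_lt_pi (by positivity) (by nlinarith [Real.pi_pos])).ne'
  have hG : Real.Gamma (1 + α) / π * (Real.Gamma (1 - α) / α) * Real.sin (π * α) = 1 := by
    have := Real.Gamma_mul_Gamma_one_sub α
    rw [eq_div_iff hsin] at this
    rw [add_comm, Real.Gamma_add_one h0.ne']
    field_simp
    rw [mul_comm α π]
    linarith
  rw [rfJ_formula' α h0 h1 (by simpa using hk), rfJ_formula' α h0 h1 (by simpa using hk),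
    rf_Icpow α (by simpa using hk), rf_Icpow α (by simpa using hk)]
  simp only [mul_one, mul_neg, abs_neg]
  have hGc : ((Real.Gamma (1 + α) / π : ℝ) : ℂ) * ((Real.Gamma (1 - α) / α : ℝ) : ℂ) *
    ((Real.sin (π * α) : ℝ) : ℂ) = 1 := by exact_mod_cast hG
  have main : ((Real.sin ((α + θ) * π / 2) : ℝ) : ℂ) *
        Complex.exp (Complex.I * ((Real.sign k * α * π / 2 : ℝ) : ℂ)) +
      ((Real.sin ((α - θ) * π / 2) : ℝ) : ℂ) *
        Complex.exp (Complex.I * ((Real.sign (-k) * α * π / 2 : ℝ) : ℂ)) =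
      ((Real.sin (π * α) : ℝ) : ℂ) *
        Complex.exp (Complex.I * ((Real.sign k * θ * π / 2 : ℝ) : ℂ)) := by
    have p1 : (α + θ) * π / 2 = α * π / 2 + θ * π / 2 := by ring
    have p2 : (α - θ) * π / 2 = α * π / 2 - θ * π / 2 := by ring
    have p3 : π * α = 2 * (α * π / 2) := by ring
    rw [p1, p2, p3]
    rcases lt_or_gt_of_ne hk with h | h
    · rw [Real.sign_of_neg h, Real.sign_of_pos (by linarith)]
      have := rf_trig (α * π / 2) (-(θ * π / 2))
      have q1 : (-1) * α * π / 2 = -(α * π / 2) := by ring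
      have q2 : (-1) * θ * π / 2 = -(θ * π / 2) := by ring
      rw [q1, q2, one_mul, ← this, add_comm, sub_neg_eq_add, sub_eq_add_neg]
    · rw [Real.sign_of_pos h, Real.sign_of_neg (by linarith)]
      have := rf_trig (α * π / 2) (θ * π / 2)
      have q1 : (-1) * α * π / 2 = -(α * π / 2) := by ring
      rw [q1, one_mul, one_mul, ← this]
  linear_combination (-((Real.Gamma (1 + α) / π : ℝ) : ℂ) * ((Real.Gamma (1 - α) / α : ℝ) : ℂ) *
    ((|k| ^ α : ℝ) : ℂ)) * main - ((|k| ^ α : ℝ) : ℂ) *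
    Complex.exp (Complex.I * ((Real.sign k * θ * π / 2 : ℝ) : ℂ)) * hGc

/-- For `α ∈ (0,1)`, `|θ| ≤ α`, and a Schwartz function `f`, the integrals in the
Riesz–Feller derivative
`(D_θ^α f)(x) = (Γ(1+α)/π) { sin((α+θ)π/2) ∫₀^∞ (f(x+ξ)-f(x)) ξ^{-1-α} dξ
               + sin((α-θ)π/2) ∫₀^∞ (f(x-ξ)-f(x)) ξ^{-1-α} dξ }`
converge absolutely, and its Fourier transform satisfies
`(D_θ^α f)^*(k) = -|k|^α e^{i sign(k) θπ/2} f^*(k)` with the convention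
`f^*(k) = ∫ e^{ikx} f(x) dx`. -/
theorem riesz_feller_fourier_symbol (α θ : ℝ) (hα : α ∈ Set.Ioo (0 : ℝ) 1)
    (hθ : |θ| ≤ α) (f : SchwartzMap ℝ ℂ) (D : ℝ → ℂ)
    (hD : ∀ x : ℝ, D x = ((Real.Gamma (1 + α) / π : ℝ) : ℂ) *
      (((Real.sin ((α + θ) * π / 2) : ℝ) : ℂ) *
          (∫ ξ in Set.Ioi (0 : ℝ), (f (x + ξ) - f x) / ((ξ ^ (1 + α) : ℝ) : ℂ)) +
        ((Real.sin ((α - θ) * π / 2) : ℝ) : ℂ) *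
          ∫ ξ in Set.Ioi (0 : ℝ), (f (x - ξ) - f x) / ((ξ ^ (1 + α) : ℝ) : ℂ))) :
    (∀ x : ℝ,
      IntegrableOn (fun ξ : ℝ => (f (x + ξ) - f x) / ((ξ ^ (1 + α) : ℝ) : ℂ))
        (Set.Ioi 0) ∧
      IntegrableOn (fun ξ : ℝ => (f (x - ξ) - f x) / ((ξ ^ (1 + α) : ℝ) : ℂ))
        (Set.Ioi 0)) ∧
    ∀ k : ℝ, ∫ x : ℝ, Complex.exp (Complex.I * ((k * x : ℝ) : ℂ)) * D x =
      -(((|k| ^ α : ℝ) : ℂ) *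
          Complex.exp (Complex.I * ((Real.sign k * θ * π / 2 : ℝ) : ℂ))) *
        ∫ x : ℝ, Complex.exp (Complex.I * ((k * x : ℝ) : ℂ)) * f x := by
  obtain ⟨h0, h1⟩ := hα
  have em : ∀ x ξ : ℝ, x - ξ = x + (-1) * ξ := fun x ξ => by ring
  have ep : ∀ x ξ : ℝ, x + ξ = x + 1 * ξ := fun x ξ => by ring
  have i1 : |(1:ℝ)| = 1 := by simp
  have i2 : |(-1:ℝ)| = 1 := by simp
  constructor
  · intro x
    constructor
    · obtain ⟨C, hC⟩ := rf_pt_bound f 1 i1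
      refine rf_int_of_bound α h0 h1 (fun ξ => f (x + ξ) - f x) (by fun_prop) C fun t ht => ?_
      rw [ep]; exact hC x t ht
    · obtain ⟨C, hC⟩ := rf_pt_bound f (-1) i2
      refine rf_int_of_bound α h0 h1 (fun ξ => f (x - ξ) - f x) (by fun_prop) C fun t ht => ?_
      rw [em]; exact hC x t ht
  · intro k
    obtain ⟨I1, E1⟩ := rf_fubini α h0 h1 f 1 i1 k
    obtain ⟨I2, E2⟩ := rf_fubini α h0 h1 f (-1) i2 k
    rw [← rf_symbol α θ h0 h1 k]
    simp only [one_mul] at I1 E1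
    simp only [← em] at I2 E2
    calc _ = ∫ x : ℝ, ((Real.Gamma (1 + α) / π : ℝ) : ℂ) *
          (((Real.sin ((α + θ) * π / 2) : ℝ) : ℂ) *
            (Complex.exp (Complex.I * ((k * x : ℝ) : ℂ)) *
              ∫ ξ in Set.Ioi (0 : ℝ), (f (x + ξ) - f x) / ((ξ ^ (1 + α) : ℝ) : ℂ)) +
          ((Real.sin ((α - θ) * π / 2) : ℝ) : ℂ) *
            (Complex.exp (Complex.I * ((k * x : ℝ) : ℂ)) *
              ∫ ξ in Set.Ioi (0 : ℝ), (f (x - ξ) - f x) / ((ξ ^ (1 + α) : ℝ) : ℂ))) := by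
          congr 1
          ext x
          rw [hD x]
          ring
      _ = _ := by
          rw [integral_const_mul, integral_add (I1.const_mul _) (I2.const_mul _),
            integral_const_mul, integral_const_mul, E1, E2]
          ring
end
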